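/- arXiv:2104.10701 — 2 statements merged into one kernel-verified Lean document; each statement's English description precedes it below -/
import Mathlib

section
/- Let G be a finite simple k-regular graph and let a, b be distinct vertices with b ∉ N(a). Assume that every neighbour x ∈ N(a) satisfies x ∉ N(b) ∪ {b} and has no neighbour in N(b) ∪ {b}. Define the network-bulk cut-set C̃_a := { {x,y} ∈ E(G) : x ∈ N(a), y ∉ N(a) ∪ N(b) ∪ {a,b} }. Then C̃_a is an a–b cut-set and its cardinality equals Σ_{x ∈ N(a)} (k − λ(a,x) − 1), where λ(a,x) := |N(a) ∩ N(x)|. -/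
/-!
The closed neighbourhood `insert a N(a)` contains `a` but not `b`. By the distance hypothesis an
edge from `x ∈ N(a)` never meets `N(b) ∪ {b}`, so the bulk cut-set is exactly the edge boundary of
`insert a N(a)` (the vertex `a` itself has no edge leaving it); deleting it disconnects `a` from
`b`.

For the count, every boundary edge has exactly one endpoint in `N(a)`, so the cut-set is in
bijection with the pairs `(x, y)`, `x ∈ N(a)`, `y ∈ N(x) \ insert a N(a)`. For fixed `x`, of the `k`
neighbours of `x` one removes `a` and the `λ(a,x)` common neighbours.
-/

open SimpleGraph Finset

/-- `F` is an `a`–`b` cut-set: a set of edges of `G` whose deletion disconnects `a` from `b`. -/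
def IsCutSet {V : Type*} (G : SimpleGraph V) (a b : V) (F : Finset (Sym2 V)) : Prop :=
  (F : Set (Sym2 V)) ⊆ G.edgeSet ∧ ¬ (G.deleteEdges (F : Set (Sym2 V))).Reachable a b

/-- The network-bulk cut-set `C̃_a`: edges `{x,y}` with `x ∈ N(a)` and
`y ∉ N(a) ∪ N(b) ∪ {a,b}`. -/
def bulkCutSet {V : Type*} [Fintype V] [DecidableEq V] (G : SimpleGraph V)
    [DecidableRel G.Adj] (a b : V) : Finset (Sym2 V) :=
  G.edgeFinset.filter (fun e => ∃ x y : V, e = s(x, y) ∧ x ∈ G.neighborFinset a ∧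
    y ∉ G.neighborFinset a ∪ G.neighborFinset b ∪ {a, b})

/-- A set of vertices closed under adjacency absorbs everything reachable from it. -/
lemma mem_of_reachable_of_closed {V : Type*} {H : SimpleGraph V} {S : Set V}
    (hS : ∀ u v, u ∈ S → H.Adj u v → v ∈ S) {u v : V} (h : H.Reachable u v) (hu : u ∈ S) :
    v ∈ S := by
  obtain ⟨p⟩ := h
  induction p with
  | nil => exact hu
  | cons hadj _ ih => exact ih (hS _ _ hu hadj)

/-- The bulk cut-set, written as the edges `s(x, y)` of pairs with `x ∈ N(a)` and
`y ∈ N(x) \ insert a N(a)`; the exclusion of `N(b) ∪ {b}` is automatic by `hfar`. -/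
lemma bulkCutSet_eq_image {V : Type*} [Fintype V] [DecidableEq V] (G : SimpleGraph V)
    [DecidableRel G.Adj] (a b : V)
    (hfar : ∀ x ∈ G.neighborFinset a,
      x ∉ insert b (G.neighborFinset b) ∧
        ∀ y ∈ G.neighborFinset x, y ∉ insert b (G.neighborFinset b)) :
    bulkCutSet G a b =
      ((G.neighborFinset a).sigma
        (fun x => G.neighborFinset x \ insert a (G.neighborFinset a))).image
        (fun p => s(p.1, p.2)) := by
  ext e
  simp only [bulkCutSet, mem_filter, mem_image, mem_sigma, Sigma.exists, mem_sdiff]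
  constructor
  · rintro ⟨he, x, y, rfl, hx, hy⟩
    rw [mem_edgeFinset, mem_edgeSet] at he
    refine ⟨x, y, ⟨hx, (G.mem_neighborFinset x y).2 he, ?_⟩, rfl⟩
    simp only [mem_union, mem_insert, mem_singleton] at hy ⊢
    tauto
  · rintro ⟨x, y, ⟨hx, hxy, hy⟩, rfl⟩
    have hb := (hfar x hx).2 y hxy
    refine ⟨?_, x, y, rfl, hx, ?_⟩
    · rw [mem_edgeFinset, mem_edgeSet]
      exact (G.mem_neighborFinset x y).1 hxy
    · simp only [mem_union, mem_insert, mem_singleton] at hy hb ⊢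
      tauto

lemma card_neighborFinset_sdiff {V : Type*} [Fintype V] [DecidableEq V] (G : SimpleGraph V)
    [DecidableRel G.Adj] (k : ℕ) (hreg : G.IsRegularOfDegree k) (a x : V)
    (hx : x ∈ G.neighborFinset a) :
    ((G.neighborFinset x \ insert a (G.neighborFinset a)).card : ℤ) =
      (k : ℤ) - ((G.neighborFinset a ∩ G.neighborFinset x).card : ℤ) - 1 := by
  have hax : a ∈ G.neighborFinset x := by
    rw [mem_neighborFinset] at hx ⊢
    exact hx.symm
  have hdeg : (G.neighborFinset x).card = k := hreg x
  have hsplit := card_sdiff_add_card_inter (G.neighborFinset x) (insert a (G.neighborFinset a))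
  have hna : a ∉ G.neighborFinset a ∩ G.neighborFinset x := by simp
  rw [inter_comm, insert_inter_of_mem hax, card_insert_of_notMem hna, hdeg] at hsplit
  omega

theorem bulkCutSet_isCutSet_and_card
    {V : Type*} [Fintype V] [DecidableEq V] (G : SimpleGraph V) [DecidableRel G.Adj]
    (k : ℕ) (hreg : G.IsRegularOfDegree k)
    (a b : V) (hab : a ≠ b) (hbna : b ∉ G.neighborFinset a)
    (hfar : ∀ x ∈ G.neighborFinset a,
      x ∉ insert b (G.neighborFinset b) ∧
        ∀ y ∈ G.neighborFinset x, y ∉ insert b (G.neighborFinset b)) :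
    IsCutSet G a b (bulkCutSet G a b) ∧
      ((bulkCutSet G a b).card : ℤ) =
        ∑ x ∈ G.neighborFinset a,
          ((k : ℤ) - ((G.neighborFinset a ∩ G.neighborFinset x).card : ℤ) - 1) := by
  have himg := bulkCutSet_eq_image G a b hfar
  refine ⟨⟨?_, ?_⟩, ?_⟩
  · intro e he
    exact mem_edgeFinset.1 (mem_filter.1 (mem_coe.1 he)).1
  · intro hreach
    have hb : b ∈ (↑(insert a (G.neighborFinset a)) : Set V) := by
      refine mem_of_reachable_of_closed ?_ hreach (by simp)
      intro u v hu huv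
      rw [deleteEdges_adj] at huv
      obtain ⟨hadj, hnot⟩ := huv
      rw [mem_coe, mem_insert] at hu
      rcases hu with rfl | hu
      · simp [hadj]
      · by_contra hv
        apply hnot
        rw [mem_coe, himg, mem_image]
        exact ⟨⟨u, v⟩, mem_sigma.2 ⟨hu, mem_sdiff.2
          ⟨(G.mem_neighborFinset u v).2 hadj, fun h => hv (mem_coe.2 h)⟩⟩, rfl⟩
    rw [mem_coe, mem_insert] at hb
    exact hb.elim (fun h => hab h.symm) hbna
  · rw [himg, card_image_of_injOn, card_sigma, Nat.cast_sum]
    · exact sum_congr rfl fun x hx => card_neighborFinset_sdiff G k hreg a x hx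
    · rintro ⟨x, y⟩ hp ⟨x', y'⟩ hq heq
      simp only [mem_coe, mem_sigma, mem_sdiff, mem_insert, not_or] at hp hq
      rcases Sym2.eq_iff.1 heq with ⟨h1, h2⟩ | ⟨h1, h2⟩
      · dsimp only at h1 h2
        rw [h1, h2]
      · -- the swapped case would put an outer endpoint into `N(a)`
        dsimp only at h1
        exact absurd (h1 ▸ hp.1) hq.2.2.2
end

section
/- (Theorem 2, exact optimal performance.) Let G be a finite simple graph, a, b distinct vertices, w a nonnegative edge-weight function, and C^m := min( w(E_a), w(E_b) ) the min-neighbourhood weight. Let k ≥ 2 be an integer and δ a real number with δ ≥ 2(k−1). Suppose: (i) every edge e not incident to a or b satisfies w(e) ≥ C^m/δ; (ii) every edge e incident to a or b satisfies w(e) ≥ (1/(k−1) − 1/δ)·C^m; and (iii) every a–b cut-set F either contains all of E_a, or contains all of E_b, or contains at least k−1 edges incident to a or b together with at least k−1 edges not incident to a or b, or contains at least δ edges not incident to a or b. Then the weighted minimum cut between a and b equals C^m. -/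
/-!
The set `E_a` of edges at `a` is an `a`–`b` cut-set, and so is `E_b`, so the minimum cut weighs at
most `C^m` (`isCutSet_incidenceFinset`). Conversely, a cut-set containing `E_a` or `E_b` weighs at
least `C^m` because weights are nonnegative. In the mixed case its `k - 1` user edges and `k - 1`
bulk edges weigh at least
`(k - 1) * (1 / (k - 1) - 1 / δ) * C^m + (k - 1) * C^m / δ = C^m`, and in the last case the `δ` bulk
edges weigh at least `δ * C^m / δ = C^m`. The mixed case uses `k - 1 ≤ δ`, which makes the user
threshold nonnegative.
-/

open SimpleGraph Finset

/-- Deleting every edge at `x` isolates `x`, hence separates it from any other vertex. -/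
lemma not_reachable_deleteEdges_incidenceFinset {V : Type*} [Fintype V] [DecidableEq V]
    (G : SimpleGraph V) [DecidableRel G.Adj] (x y : V) (hxy : x ≠ y) :
    ¬ (G.deleteEdges (G.incidenceFinset x : Set (Sym2 V))).Reachable x y := by
  rintro ⟨p⟩
  cases p with
  | nil => exact hxy rfl
  | cons h _ =>
    rw [SimpleGraph.deleteEdges_adj] at h
    apply h.2
    rw [Finset.mem_coe, SimpleGraph.mem_incidenceFinset]
    exact ⟨h.1, Sym2.mem_mk_left _ _⟩

lemma isCutSet_incidenceFinset {V : Type*} [Fintype V] [DecidableEq V]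
    (G : SimpleGraph V) [DecidableRel G.Adj] (a b : V) (hab : a ≠ b) :
    IsCutSet G a b (G.incidenceFinset a) ∧ IsCutSet G a b (G.incidenceFinset b) := by
  have hsub : ∀ x, (G.incidenceFinset x : Set (Sym2 V)) ⊆ G.edgeSet := fun x e he =>
    ((G.mem_incidenceFinset x e).1 he).1
  exact ⟨⟨hsub a, not_reachable_deleteEdges_incidenceFinset G a b hab⟩,
    ⟨hsub b, fun h => not_reachable_deleteEdges_incidenceFinset G b a hab.symm h.symm⟩⟩

/-- At least `r` edges (`r` real), each of weight at least `t ≥ 0`, weigh at least `r * t`. -/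
lemma mul_le_sum_of_le_card {α : Type*} (s : Finset α) (w : α → ℝ) (r t : ℝ) (ht : 0 ≤ t)
    (hr : r ≤ (s.card : ℝ)) (h : ∀ e ∈ s, t ≤ w e) : r * t ≤ ∑ e ∈ s, w e := by
  have h1 := s.card_nsmul_le_sum w t h
  rw [nsmul_eq_mul] at h1
  exact (mul_le_mul_of_nonneg_right hr ht).trans h1

/-- Theorem 2 (exact optimal performance): the weighted minimum cut equals the
min-neighbourhood weight. -/
theorem threshold_capacity_exact
    {V : Type*} [Fintype V] [DecidableEq V] (G : SimpleGraph V) [DecidableRel G.Adj]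
    (a b : V) (hab : a ≠ b)
    (w : Sym2 V → ℝ) (hw : ∀ e ∈ G.edgeSet, 0 ≤ w e)
    (Cm : ℝ)
    (hCm : Cm = min (∑ e ∈ G.incidenceFinset a, w e) (∑ e ∈ G.incidenceFinset b, w e))
    (k : ℕ) (hk : 2 ≤ k) (δ : ℝ) (hδ : 2 * ((k : ℝ) - 1) ≤ δ)
    (hbulkthr : ∀ e ∈ G.edgeSet, a ∉ e → b ∉ e → Cm / δ ≤ w e)
    (huserthr : ∀ e ∈ G.edgeSet, (a ∈ e ∨ b ∈ e) →
      (1 / ((k : ℝ) - 1) - 1 / δ) * Cm ≤ w e)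
    (hcut : ∀ F : Finset (Sym2 V), IsCutSet G a b F →
      G.incidenceFinset a ⊆ F ∨ G.incidenceFinset b ⊆ F ∨
        (k - 1 ≤ (F.filter (fun e => a ∈ e ∨ b ∈ e)).card ∧
          k - 1 ≤ (F.filter (fun e => a ∉ e ∧ b ∉ e)).card) ∨
        δ ≤ ((F.filter (fun e => a ∉ e ∧ b ∉ e)).card : ℝ)) :
    sInf {x : ℝ | ∃ F : Finset (Sym2 V), IsCutSet G a b F ∧ ∑ e ∈ F, w e = x} = Cm := by
  classical
  have hsub : ∀ x, ∀ e ∈ G.incidenceFinset x, e ∈ G.edgeSet := fun x e he =>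
    ((G.mem_incidenceFinset x e).1 he).1
  have hC0 : 0 ≤ Cm := by
    rw [hCm]
    exact le_min (Finset.sum_nonneg fun e he => hw e (hsub a e he))
      (Finset.sum_nonneg fun e he => hw e (hsub b e he))
  have hm1 : (1 : ℝ) ≤ (k : ℝ) - 1 := by
    have : (2 : ℝ) ≤ (k : ℝ) := by exact_mod_cast hk
    linarith
  have hm : ((k - 1 : ℕ) : ℝ) = (k : ℝ) - 1 := by
    rw [Nat.cast_sub (by omega)]
    simp
  generalize (k : ℝ) - 1 = m at *
  have hδ0 : 0 < δ := by linarith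
  have hcoef : 0 ≤ 1 / m - 1 / δ :=
    sub_nonneg.2 (one_div_le_one_div_of_le (by linarith) (by linarith))
  obtain ⟨hcutA, hcutB⟩ := isCutSet_incidenceFinset G a b hab
  refine IsLeast.csInf_eq ⟨?_, ?_⟩
  · rcases min_choice (∑ e ∈ G.incidenceFinset a, w e) (∑ e ∈ G.incidenceFinset b, w e) with h | h
    · exact ⟨_, hcutA, by rw [hCm, h]⟩
    · exact ⟨_, hcutB, by rw [hCm, h]⟩
  · rintro _ ⟨F, hF, rfl⟩
    have hFe : ∀ e ∈ F, e ∈ G.edgeSet := fun e he => hF.1 he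
    have hbulk : ∀ e ∈ F.filter (fun e => a ∉ e ∧ b ∉ e), Cm / δ ≤ w e := fun e he => by
      obtain ⟨he, h1, h2⟩ := Finset.mem_filter.1 he
      exact hbulkthr e (hFe e he) h1 h2
    have hsplit : ∑ e ∈ F, w e = ∑ e ∈ F.filter (fun e => a ∈ e ∨ b ∈ e), w e +
        ∑ e ∈ F.filter (fun e => a ∉ e ∧ b ∉ e), w e := by
      rw [← Finset.sum_filter_add_sum_filter_not F (fun e => a ∈ e ∨ b ∈ e)]
      simp only [not_or]
    rcases hcut F hF with h | h | ⟨hu, hv⟩ | h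
    · rw [hCm]
      exact (min_le_left _ _).trans
        (Finset.sum_le_sum_of_subset_of_nonneg h fun e he _ => hw e (hFe e he))
    · rw [hCm]
      exact (min_le_right _ _).trans
        (Finset.sum_le_sum_of_subset_of_nonneg h fun e he _ => hw e (hFe e he))
    · have h1 := mul_le_sum_of_le_card _ w m _ (mul_nonneg hcoef hC0)
        (by rw [← hm]; exact_mod_cast hu) (fun e he => by
          obtain ⟨he, h'⟩ := Finset.mem_filter.1 he
          exact huserthr e (hFe e he) h')
      have h2 := mul_le_sum_of_le_card _ w m _ (div_nonneg hC0 hδ0.le)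
        (by rw [← hm]; exact_mod_cast hv) hbulk
      have h3 : m * ((1 / m - 1 / δ) * Cm) + m * (Cm / δ) = Cm := by
        have : m ≠ 0 := by linarith
        field_simp
        ring
      linarith
    · have h2 := mul_le_sum_of_le_card _ w δ _ (div_nonneg hC0 hδ0.le) h hbulk
      rw [mul_div_cancel₀ _ hδ0.ne'] at h2
      have h1 : 0 ≤ ∑ e ∈ F.filter (fun e => a ∈ e ∨ b ∈ e), w e :=
        Finset.sum_nonneg fun e he => hw e (hFe e (Finset.mem_filter.1 he).1)
      linarith
end
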